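/- Let p, q ≥ 1 and let f : ℝ^3 → ℍ^{p×q} be a matrix-valued function of three real variables x = (x_1,x_2,x_3) such that each of the four real components of each quaternionic entry of f is a rational function of x_1, x_2, x_3 (a quotient of real polynomials) whose denominator does not vanish at 0. Then there exist N ∈ ℕ, matrices D ∈ ℍ^{p×q}, C ∈ ℍ^{p×N}, A_1, A_2, A_3 ∈ ℍ^{N×N}, B_1, B_2, B_3 ∈ ℍ^{N×q}, and ε > 0 such that for every x ∈ ℝ^3 with ‖x‖ < ε: all denominators are nonzero at x, the matrix I_N − x_1A_1 − x_2A_2 − x_3A_3 is invertible in the ring of N×N quaternionic matrices, and f(x) = D + C (I_N − x_1A_1 − x_2A_2 − x_3A_3)^{−1} (x_1B_1 + x_2B_2 + x_3B_3). -/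

import Mathlib

/-!
Over a common denominator `Q` with `Q(0) = 1`, the function is a linear combination of the rational
functions `x ^ m / Q(x)`, where `m` runs over a box of exponents. Each monomial of the box other
than `1` is a variable times a smaller one, so multiplication by a pencil `N(x)`, linear in `x`,
turns the vector `v(x)` of all monomials into `v(x) - e₀`. For the rank-one perturbation
`G(x) = 1 - (1 - e₀ qᵀ) N(x)`, with `q` the coefficient vector of `Q`, this gives
`G(x) v(x) = Q(x) e₀`, while the same recursion forces every `w` with `G(x) w = 0` to be a multiple
of `v(x)`. Hence `G(x)` is invertible as soon as `Q(x) ≠ 0`, and the first column of its inverse is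
`v(x) / Q(x)`. Tensoring with an identity matrix turns `G(x)` into a pencil `H(x)` of matrices
over the noncommutative ring, and any combination of the `x ^ m / Q(x)` with constant matrix
coefficients into `C H⁻¹ B`. Finally `C H⁻¹ B = C B + C H⁻¹ (1 - H) B` has the required form, since
`1 - H(x)` is linear in `x`.
-/

open Matrix MvPolynomial Filter Topology

section LinearPencil

variable {𝕜 E F σ : Type*} [CommSemiring 𝕜] [Fintype σ]

/-- The linear pencil `1 - ∑ k, x k • A k` in commuting scalar variables `x`, with coefficients `A`
in an algebra; its inverse is the resolvent of a realization. -/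
def linearPencil [Ring E] [Module 𝕜 E] (A : σ → E) (x : σ → 𝕜) : E :=
  1 - ∑ k, x k • A k

theorem map_linearPencil [Ring E] [Algebra 𝕜 E] [Ring F] [Algebra 𝕜 F] (φ : E →ₐ[𝕜] F)
    (A : σ → E) (x : σ → 𝕜) : φ (linearPencil A x) = linearPencil (φ ∘ A) x := by
  simp [linearPencil]

theorem mul_add_mul_ringInverse_linearPencil_mul_sum {R m n ν : Type*} [Ring R] [Algebra 𝕜 R]
    [Fintype ν] [DecidableEq ν] {A : σ → Matrix ν ν R} {x : σ → 𝕜} (h : IsUnit (linearPencil A x))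
    (B : Matrix ν n R) (C : Matrix m ν R) :
    C * B + C * Ring.inverse (linearPencil A x) * ∑ k, x k • (A k * B) =
      C * Ring.inverse (linearPencil A x) * B := by
  have hsum : ∑ k, x k • (A k * B) = (1 - linearPencil A x) * B := by
    simp [linearPencil, Matrix.sum_mul]
  rw [hsum, Matrix.sub_mul, Matrix.mul_sub, Matrix.one_mul, Matrix.mul_assoc C _ (_ * B),
    ← Matrix.mul_assoc _ _ B, Ring.inverse_mul_cancel _ h, Matrix.one_mul, add_sub_cancel]

end LinearPencil

theorem map_ringInverse_of_isUnit {M₀ N₀ F : Type*} [MonoidWithZero M₀] [MonoidWithZero N₀]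
    [FunLike F M₀ N₀] [MonoidHomClass F M₀ N₀] (φ : F) {a : M₀} (ha : IsUnit a) :
    φ (Ring.inverse a) = Ring.inverse (φ a) := by
  obtain ⟨u, rfl⟩ := ha
  rw [Ring.inverse_unit]
  exact (Ring.inverse_unit (u.map (φ : M₀ →* N₀))).symm

theorem exists_algHom_mul_mul_eq_sum_smul {𝕜 R S m n : Type*} [CommSemiring 𝕜] [Semiring R]
    [Algebra 𝕜 R] [Fintype S] [DecidableEq S] [Finite n] (s₀ : S) (W : S → Matrix m n R) :
    ∃ (N : ℕ) (φ : Matrix S S 𝕜 →ₐ[𝕜] Matrix (Fin N) (Fin N) R) (C : Matrix m (Fin N) R)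
      (B : Matrix (Fin N) n R), ∀ X, C * φ X * B = ∑ s, X s s₀ • W s := by
  classical
  cases nonempty_fintype n
  let e := Fintype.equivFin (S × n)
  let φ : Matrix S S 𝕜 →ₐ[𝕜] Matrix (S × n) (S × n) R :=
    (compAlgEquiv S n R 𝕜).toAlgHom.comp (Algebra.ofId 𝕜 (Matrix n n R)).mapMatrix
  let C : Matrix m (S × n) R := of fun i a => W a.1 i a.2
  let B : Matrix (S × n) n R := of fun a l => if a = (s₀, l) then 1 else 0
  refine ⟨_, (reindexAlgEquiv 𝕜 R e).toAlgHom.comp φ, C.submatrix id e.symm,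
    B.submatrix e.symm id, fun X => ?_⟩
  have hφ (a b : S × n) : φ X a b = if a.2 = b.2 then algebraMap 𝕜 R (X a.1 b.1) else 0 := by
    simp [φ, Algebra.ofId_apply, algebraMap_matrix_apply]
  have hCB : C * φ X * B = ∑ s, X s s₀ • W s := by
    ext i l
    simp [Matrix.mul_apply, hφ, B, C, Fintype.sum_prod_type, Matrix.sum_apply, Algebra.smul_def,
      Algebra.commutes]
  simpa [submatrix_mul_equiv] using hCB

section MonomialBox

variable {σ : Type*} {M : σ →₀ ℕ}

theorem exists_add_single_eq {m : Set.Iic M} (hm : m ≠ ⊥) :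
    ∃ kn : σ × Set.Iic M, kn.2.1 + Finsupp.single kn.1 1 = m.1 := by
  obtain ⟨k, hk⟩ : ∃ k, m.1 k ≠ 0 := by
    contrapose! hm
    exact Subtype.ext (Finsupp.ext hm)
  exact ⟨(k, ⟨m.1 - Finsupp.single k 1, Set.mem_Iic.2 (tsub_le_self.trans m.2)⟩),
    tsub_add_cancel_of_le (Finsupp.single_le_iff.2 (Nat.one_le_iff_ne_zero.2 hk))⟩

open scoped Classical in
/-- A factorization `X ^ m = X k * X ^ n`, chosen once for each monomial of the box and recorded as
`some (k, n)`; it is `none` for the monomial `1`, whose exponent is `⊥`. -/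
noncomputable def factorVariable (m : Set.Iic M) : Option (σ × Set.Iic M) :=
  if hm : m = ⊥ then none else some (exists_add_single_eq hm).choose

theorem factorVariable_bot : factorVariable (⊥ : Set.Iic M) = none :=
  dif_pos rfl

theorem exists_factorVariable_eq_some {m : Set.Iic M} (hm : m ≠ ⊥) :
    ∃ k n, factorVariable m = some (k, n) ∧ n.1 + Finsupp.single k 1 = m.1 :=
  ⟨_, _, dif_neg hm, (exists_add_single_eq hm).choose_spec⟩

section Eval

variable {𝕜 : Type*} [CommSemiring 𝕜]

variable (M) in
/-- The vector of the values at `x` of the monomials in the box: up to the factor `1 / Q(x)`, the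
state of the realization. -/
noncomputable def monomialVec (x : σ → 𝕜) (m : Set.Iic M) : 𝕜 :=
  eval x (monomial m.1 1)

theorem monomialVec_bot (x : σ → 𝕜) : monomialVec M x ⊥ = 1 := by
  simp [monomialVec, bot_eq_zero]

theorem monomialVec_of_add_single {k : σ} {n m : Set.Iic M}
    (h : n.1 + Finsupp.single k 1 = m.1) (x : σ → 𝕜) :
    monomialVec M x m = x k * monomialVec M x n := by
  rw [monomialVec, ← h, monomial_add_single, map_mul, map_pow, eval_X, pow_one, mul_comm,
    monomialVec]

theorem eval_eq_sum_coeff_mul_monomialVec [Fintype (Set.Iic M)] {p : MvPolynomial σ 𝕜}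
    (hp : (p.support : Set (σ →₀ ℕ)) ⊆ Set.Iic M) (x : σ → 𝕜) :
    eval x p = ∑ m : Set.Iic M, coeff m.1 p * monomialVec M x m := by
  simp only [monomialVec]
  rw [Finset.sum_set_coe (Set.Iic M) (f := fun m => coeff m p * eval x (monomial m 1)),
    ← Finset.sum_subset (s₁ := p.support)]
  · conv_lhs => rw [p.as_sum, map_sum]
    simp [eval_monomial]
  · exact fun m hm => Set.mem_toFinset.2 (hp hm)
  · intro m _ hm
    simp [notMem_support_iff.1 hm]

end Eval

variable [Fintype σ] [DecidableEq σ]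

section Shift

variable {𝕜 : Type*} [CommRing 𝕜]

variable (M 𝕜) in
open scoped Classical in
/-- The coefficient at `x k` of the linear pencil that replaces the entry at each `m ≠ ⊥` of a
vector by `x k` times the entry at `n`, where `X ^ m = X k * X ^ n` is the chosen factorization. -/
noncomputable def shiftMatrix (k : σ) : Matrix (Set.Iic M) (Set.Iic M) 𝕜 :=
  of fun m n => if factorVariable m = some (k, n) then 1 else 0

theorem sum_smul_shiftMatrix_mulVec_bot (x : σ → 𝕜) (w : Set.Iic M → 𝕜) :
    ((∑ k, x k • shiftMatrix M 𝕜 k) *ᵥ w) ⊥ = 0 := by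
  simp [mulVec, dotProduct, Matrix.sum_apply, shiftMatrix, factorVariable_bot]

theorem sum_smul_shiftMatrix_mulVec {m n : Set.Iic M} {k : σ} (h : factorVariable m = some (k, n))
    (x : σ → 𝕜) (w : Set.Iic M → 𝕜) :
    ((∑ k, x k • shiftMatrix M 𝕜 k) *ᵥ w) m = x k * w n := by
  simp [mulVec, dotProduct, Matrix.sum_apply, shiftMatrix, h, Prod.ext_iff, ite_and]

theorem sum_smul_shiftMatrix_mulVec_monomialVec (x : σ → 𝕜) :
    (∑ k, x k • shiftMatrix M 𝕜 k) *ᵥ monomialVec M x = monomialVec M x - Pi.single ⊥ 1 := by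
  ext m
  obtain rfl | hm := eq_or_ne m ⊥
  · simp [sum_smul_shiftMatrix_mulVec_bot, monomialVec_bot]
  · obtain ⟨k, n, hmkn, hadd⟩ := exists_factorVariable_eq_some hm
    simp [sum_smul_shiftMatrix_mulVec hmkn, monomialVec_of_add_single hadd, hm]

theorem eq_smul_monomialVec_of_eq_shift_mulVec {x : σ → 𝕜} {w : Set.Iic M → 𝕜}
    (hw : ∀ m ≠ ⊥, w m = ((∑ k, x k • shiftMatrix M 𝕜 k) *ᵥ w) m) :
    w = w ⊥ • monomialVec M x := by
  ext m
  induction m using WellFoundedLT.induction with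
  | ind m ih =>
    obtain rfl | hm := eq_or_ne m ⊥
    · simp [monomialVec_bot]
    · obtain ⟨k, n, hmkn, hadd⟩ := exists_factorVariable_eq_some hm
      have hlt : n < m := by
        rw [← Subtype.coe_lt_coe, ← hadd]
        exact lt_add_of_pos_right _ (by simp [pos_iff_ne_zero])
      rw [hw m hm, sum_smul_shiftMatrix_mulVec hmkn, ih n hlt]
      simp [monomialVec_of_add_single hadd, mul_left_comm]

variable (M) in
/-- The companion matrices of `Q`: the shift matrices with the row at `⊥` modified so that
`monomialVec M x` solves a linear system whose right-hand side is supported at `⊥`. -/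
noncomputable def companionMatrix (Q : MvPolynomial σ 𝕜) (k : σ) :
    Matrix (Set.Iic M) (Set.Iic M) 𝕜 :=
  (1 - vecMulVec (Pi.single ⊥ 1) fun m => coeff m.1 Q) * shiftMatrix M 𝕜 k

theorem linearPencil_companionMatrix_mulVec (Q : MvPolynomial σ 𝕜) (x : σ → 𝕜)
    (w : Set.Iic M → 𝕜) :
    linearPencil (companionMatrix M Q) x *ᵥ w =
      w - (∑ k, x k • shiftMatrix M 𝕜 k) *ᵥ w +
        Pi.single ⊥ ((fun m => coeff m.1 Q) ⬝ᵥ ((∑ k, x k • shiftMatrix M 𝕜 k) *ᵥ w)) := by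
  have hsum : ∑ k, x k • companionMatrix M Q k =
      (1 - vecMulVec (Pi.single ⊥ 1) fun m => coeff m.1 Q) * ∑ k, x k • shiftMatrix M 𝕜 k := by
    simp [companionMatrix, Matrix.mul_sum]
  rw [linearPencil, hsum, sub_mulVec, one_mulVec, ← mulVec_mulVec, sub_mulVec, one_mulVec,
    vecMulVec_mulVec, ← sub_add]
  simp [← Pi.single_smul]

theorem linearPencil_companionMatrix_mulVec_monomialVec {Q : MvPolynomial σ 𝕜}
    (hQ : (Q.support : Set (σ →₀ ℕ)) ⊆ Set.Iic M) (hQ0 : constantCoeff Q = 1) (x : σ → 𝕜) :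
    linearPencil (companionMatrix M Q) x *ᵥ monomialVec M x = Pi.single ⊥ (eval x Q) := by
  have hQ0' : coeff (⊥ : Set.Iic M).1 Q = 1 := hQ0
  rw [linearPencil_companionMatrix_mulVec, sum_smul_shiftMatrix_mulVec_monomialVec, sub_sub_cancel,
    dotProduct_sub, dotProduct_single_one, hQ0', ← Pi.single_add, add_sub_cancel,
    eval_eq_sum_coeff_mul_monomialVec hQ]
  rfl

end Shift

variable {𝕜 : Type*} [Field 𝕜] {Q : MvPolynomial σ 𝕜} {x : σ → 𝕜}

theorem isUnit_linearPencil_companionMatrix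
    (hQ : (Q.support : Set (σ →₀ ℕ)) ⊆ Set.Iic M) (hQ0 : constantCoeff Q = 1)
    (hx : eval x Q ≠ 0) : IsUnit (linearPencil (companionMatrix M Q) x) := by
  rw [← mulVec_injective_iff_isUnit, ← coe_mulVecLin, ← LinearMap.ker_eq_bot, LinearMap.ker_eq_bot']
  intro w hw
  rw [mulVecLin_apply] at hw
  have hw_eq : w = w ⊥ • monomialVec M x := by
    refine eq_smul_monomialVec_of_eq_shift_mulVec fun m hm => ?_
    have := congr_fun hw m
    rw [linearPencil_companionMatrix_mulVec] at this
    simpa [hm, sub_eq_zero] using this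
  have hbot : w ⊥ = 0 := by
    rw [hw_eq, mulVec_smul, linearPencil_companionMatrix_mulVec_monomialVec hQ hQ0] at hw
    simpa [hx, monomialVec_bot] using hw
  rw [hw_eq, hbot, zero_smul]

theorem ringInverse_linearPencil_companionMatrix_apply_bot
    (hQ : (Q.support : Set (σ →₀ ℕ)) ⊆ Set.Iic M) (hQ0 : constantCoeff Q = 1)
    (hx : eval x Q ≠ 0) (m : Set.Iic M) :
    Ring.inverse (linearPencil (companionMatrix M Q) x) m ⊥ = monomialVec M x m / eval x Q := by
  have hG := isUnit_linearPencil_companionMatrix hQ hQ0 hx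
  have hsol : monomialVec M x =
      Ring.inverse (linearPencil (companionMatrix M Q) x) *ᵥ Pi.single ⊥ (eval x Q) := by
    rw [← linearPencil_companionMatrix_mulVec_monomialVec hQ hQ0, mulVec_mulVec,
      Ring.inverse_mul_cancel _ hG, one_mulVec]
  rw [hsol, eq_div_iff hx, mulVec_single]
  rfl

end MonomialBox

theorem exists_common_denominator {σ 𝕜 τ : Type*} [Field 𝕜] [Finite τ]
    (P Q : τ → MvPolynomial σ 𝕜) (hQ0 : ∀ t, constantCoeff (Q t) ≠ 0) :
    ∃ (P' : τ → MvPolynomial σ 𝕜) (Q' : MvPolynomial σ 𝕜), constantCoeff Q' = 1 ∧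
      ∀ x, (∀ t, eval x (Q t) ≠ 0) → eval x Q' ≠ 0 ∧
        ∀ t, eval x (P t) / eval x (Q t) = eval x (P' t) / eval x Q' := by
  classical
  cases nonempty_fintype τ
  let c := (∏ t, constantCoeff (Q t))⁻¹
  have hc : (∏ t, constantCoeff (Q t)) ≠ 0 := Finset.prod_ne_zero_iff.2 fun t _ => hQ0 t
  refine ⟨fun t => .C c * (P t * ∏ s ∈ Finset.univ.erase t, Q s), .C c * ∏ t, Q t, ?_,
    fun x hx => ?_⟩
  · simp [c, hc]
  have hQ' : eval x (.C c * ∏ t, Q t) ≠ 0 := by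
    simp [c, hc, Finset.prod_ne_zero_iff, hx]
  refine ⟨hQ', fun t => ?_⟩
  rw [div_eq_div_iff (hx t) hQ', ← Finset.mul_prod_erase _ _ (Finset.mem_univ t)]
  simp only [map_mul]
  ring

theorem exists_supports_subset_Iic {σ R τ : Type*} [CommSemiring R] [Finite τ]
    (p : τ → MvPolynomial σ R) :
    ∃ M : σ →₀ ℕ, ∀ t, ((p t).support : Set (σ →₀ ℕ)) ⊆ Set.Iic M := by
  obtain ⟨M, hM⟩ := (Set.finite_iUnion fun t => (p t).support.finite_toSet).bddAbove
  exact ⟨M, fun t m hm => hM (Set.mem_iUnion_of_mem t hm)⟩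

theorem exists_realization_sum_smul_div {σ 𝕜 R m n : Type*} [Fintype σ] [DecidableEq σ] [Field 𝕜]
    [Ring R] [Algebra 𝕜 R] [Finite n] {M : σ →₀ ℕ} (Q : MvPolynomial σ 𝕜)
    (hQ : (Q.support : Set (σ →₀ ℕ)) ⊆ Set.Iic M) (hQ0 : constantCoeff Q = 1)
    (W : Set.Iic M → Matrix m n R) :
    ∃ (N : ℕ) (D : Matrix m n R) (C : Matrix m (Fin N) R) (A : σ → Matrix (Fin N) (Fin N) R)
      (B : σ → Matrix (Fin N) n R), ∀ x : σ → 𝕜, eval x Q ≠ 0 →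
        IsUnit (linearPencil A x) ∧
        D + C * Ring.inverse (linearPencil A x) * ∑ k, x k • B k =
          ∑ s, (monomialVec M x s / eval x Q) • W s := by
  obtain ⟨N, φ, C, B, hφ⟩ := exists_algHom_mul_mul_eq_sum_smul (𝕜 := 𝕜) ⊥ W
  refine ⟨N, C * B, C, φ ∘ companionMatrix M Q, fun k => (φ ∘ companionMatrix M Q) k * B,
    fun x hx => ?_⟩
  have hunit := isUnit_linearPencil_companionMatrix hQ hQ0 hx
  have hφunit : IsUnit (linearPencil (φ ∘ companionMatrix M Q) x) :=
    map_linearPencil φ (companionMatrix M Q) x ▸ hunit.map φ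
  refine ⟨hφunit, ?_⟩
  rw [mul_add_mul_ringInverse_linearPencil_mul_sum hφunit, ← map_linearPencil,
    ← map_ringInverse_of_isUnit φ hunit, hφ]
  simp only [ringInverse_linearPencil_companionMatrix_apply_bot hQ hQ0 hx]

theorem stmt3_general {σ 𝕜 R ι m n : Type*} [Fintype σ] [Field 𝕜] [Ring R] [Algebra 𝕜 R]
    [Fintype ι] [Finite m] [Finite n] (b : ι → R) (f : (σ → 𝕜) → Matrix m n R)
    (P Q : m → n → ι → MvPolynomial σ 𝕜) (hQ0 : ∀ i l c, eval (0 : σ → 𝕜) (Q i l c) ≠ 0)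
    (hf : ∀ x i l, f x i l = ∑ c, (eval x (P i l c) / eval x (Q i l c)) • b c) :
    ∃ (N : ℕ) (D : Matrix m n R) (C : Matrix m (Fin N) R) (A : σ → Matrix (Fin N) (Fin N) R)
      (B : σ → Matrix (Fin N) n R), ∀ x : σ → 𝕜, (∀ i l c, eval x (Q i l c) ≠ 0) →
        IsUnit (1 - ∑ k, x k • A k) ∧
        f x = D + C * Ring.inverse (1 - ∑ k, x k • A k) * ∑ k, x k • B k := by
  classical
  obtain ⟨P', Q', hQ'0, hPQ⟩ := exists_common_denominator
    (fun t : m × n × ι => P t.1 t.2.1 t.2.2) (fun t => Q t.1 t.2.1 t.2.2)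
    (fun t => by simpa using hQ0 t.1 t.2.1 t.2.2)
  obtain ⟨M, hM⟩ := exists_supports_subset_Iic fun t : Option (m × n × ι) => t.elim Q' P'
  have hPM (t : m × n × ι) : ((P' t).support : Set (σ →₀ ℕ)) ⊆ Set.Iic M := hM (some t)
  obtain ⟨N, D, C, A, B, h⟩ := exists_realization_sum_smul_div Q' (hM none) hQ'0
    fun s => of fun i l => ∑ c, coeff s.1 (P' (i, l, c)) • b c
  refine ⟨N, D, C, A, B, fun x hx => ?_⟩
  obtain ⟨hQ'x, hdiv⟩ := hPQ x fun t => hx t.1 t.2.1 t.2.2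
  obtain ⟨hunit, hreal⟩ := h x hQ'x
  refine ⟨hunit, .trans ?_ hreal.symm⟩
  ext i l
  have hentry (c : ι) : eval x (P i l c) / eval x (Q i l c) =
      ∑ s, monomialVec M x s / eval x Q' * coeff s.1 (P' (i, l, c)) := by
    rw [hdiv (i, l, c), eval_eq_sum_coeff_mul_monomialVec (hPM (i, l, c)), Finset.sum_div]
    exact Finset.sum_congr rfl fun s _ => by ring
  simp only [hf, hentry, Matrix.sum_apply, Matrix.smul_apply, of_apply, Finset.sum_smul,
    Finset.smul_sum, smul_smul]
  exact Finset.sum_comm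

theorem exists_pos_forall_norm_lt_eval_ne_zero {σ 𝕜 τ : Type*} [Fintype σ] [RCLike 𝕜] [Finite τ]
    (Q : τ → MvPolynomial σ 𝕜) (hQ0 : ∀ t, eval (0 : σ → 𝕜) (Q t) ≠ 0) :
    ∃ ε > 0, ∀ x : EuclideanSpace 𝕜 σ, ‖x‖ < ε → ∀ t, eval (fun k => x k) (Q t) ≠ 0 := by
  have hnear : ∀ᶠ x : EuclideanSpace 𝕜 σ in 𝓝 0, ∀ t, eval (fun k => x k) (Q t) ≠ 0 := by
    refine eventually_all.2 fun t => ?_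
    have hcont : Continuous fun x : EuclideanSpace 𝕜 σ => eval (fun k => x k) (Q t) :=
      (MvPolynomial.continuous_eval (Q t)).comp (by fun_prop)
    exact hcont.continuousAt.eventually_ne (hQ0 t)
  obtain ⟨ε, hε, h⟩ := Metric.eventually_nhds_iff.1 hnear
  exact ⟨ε, hε, fun x hx => h (by simpa using hx)⟩

theorem quaternion_mk_eq_sum_smul_basisOneIJK {R : Type*} [CommRing R] (a : Fin 4 → R) :
    (⟨a 0, a 1, a 2, a 3⟩ : Quaternion R) =
      ∑ c, a c • QuaternionAlgebra.basisOneIJK (-1 : R) 0 (-1) c := by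
  rw [← (QuaternionAlgebra.basisOneIJK (-1 : R) 0 (-1)).sum_repr ⟨a 0, a 1, a 2, a 3⟩,
    QuaternionAlgebra.coe_basisOneIJK_repr]
  simp [Fin.sum_univ_four]

/-- Realization of quaternionic-matrix-valued rational functions of three real variables
analytic at the origin: `f(x) = D + C (I − x₁A₁ − x₂A₂ − x₃A₃)⁻¹ (x₁B₁ + x₂B₂ + x₃B₃)`,
where the inverse is taken in the ring of `N×N` quaternionic matrices. -/
theorem stmt3 (p q : ℕ) (hp : 1 ≤ p) (hq : 1 ≤ q)
    (f : (Fin 3 → ℝ) → Matrix (Fin p) (Fin q) (Quaternion ℝ))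
    (P Q : Fin p → Fin q → Fin 4 → MvPolynomial (Fin 3) ℝ)
    (hQ0 : ∀ i l c, MvPolynomial.eval (0 : Fin 3 → ℝ) (Q i l c) ≠ 0)
    (hf : ∀ (x : Fin 3 → ℝ) (i : Fin p) (l : Fin q),
      f x i l =
        ⟨MvPolynomial.eval x (P i l 0) / MvPolynomial.eval x (Q i l 0),
         MvPolynomial.eval x (P i l 1) / MvPolynomial.eval x (Q i l 1),
         MvPolynomial.eval x (P i l 2) / MvPolynomial.eval x (Q i l 2),
         MvPolynomial.eval x (P i l 3) / MvPolynomial.eval x (Q i l 3)⟩) :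
    ∃ (N : ℕ) (D : Matrix (Fin p) (Fin q) (Quaternion ℝ))
      (C : Matrix (Fin p) (Fin N) (Quaternion ℝ))
      (A : Fin 3 → Matrix (Fin N) (Fin N) (Quaternion ℝ))
      (B : Fin 3 → Matrix (Fin N) (Fin q) (Quaternion ℝ))
      (ε : ℝ), 0 < ε ∧
      ∀ x : EuclideanSpace ℝ (Fin 3), ‖x‖ < ε →
        (∀ i l c, MvPolynomial.eval (fun k => x k) (Q i l c) ≠ 0) ∧
        IsUnit ((1 : Matrix (Fin N) (Fin N) (Quaternion ℝ)) - ∑ k, x k • A k) ∧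
        f (fun k => x k) =
          D + C * Ring.inverse ((1 : Matrix (Fin N) (Fin N) (Quaternion ℝ)) - ∑ k, x k • A k) *
            (∑ k, x k • B k) := by
  obtain ⟨N, D, C, A, B, hreal⟩ := stmt3_general (QuaternionAlgebra.basisOneIJK (-1 : ℝ) 0 (-1)) f
    P Q hQ0 fun x i l => (hf x i l).trans <| quaternion_mk_eq_sum_smul_basisOneIJK
      fun c => MvPolynomial.eval x (P i l c) / MvPolynomial.eval x (Q i l c)
  obtain ⟨ε, hε, hne⟩ := exists_pos_forall_norm_lt_eval_ne_zero
    (fun t : Fin p × Fin q × Fin 4 => Q t.1 t.2.1 t.2.2) fun t => hQ0 t.1 t.2.1 t.2.2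
  exact ⟨N, D, C, A, B, ε, hε, fun x hx =>
    ⟨fun i l c => hne x hx (i, l, c), hreal _ fun i l c => hne x hx (i, l, c)⟩⟩
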